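/- arXiv:2511.13522 — 2 statements merged into one kernel-verified Lean document; each statement's English description precedes it below -/
import Mathlib

section
/- Let F_x, F_y, F_z, F_w, c_r, C_α be real numbers with F_z > 0 and C_α < 0. Then the second-order cone inequality −F_x + F_w − (c_r + C_α)·F_z ≥ sqrt((2·F_y)² + (F_x − F_w + (c_r − C_α)·F_z)²) holds if and only if F_x ≤ F_w − c_r·F_z + F_y²/(C_α·F_z). -/
/-- Second-order conic reformulation of the powertrain force constraint (27)→(28). -/
theorem powertrain_soc_iff (Fx Fy Fz Fw cr Cα : ℝ) (hFz : Fz > 0) (hCα : Cα < 0) :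
    (-Fx + Fw - (cr + Cα) * Fz ≥
        Real.sqrt ((2 * Fy) ^ 2 + (Fx - Fw + (cr - Cα) * Fz) ^ 2)) ↔
      Fx ≤ Fw - cr * Fz + Fy ^ 2 / (Cα * Fz) := by
  have hb : 0 < -(Cα * Fz) := by nlinarith
  have key : Fx ≤ Fw - cr * Fz + Fy ^ 2 / (Cα * Fz) ↔
      Fy ^ 2 ≤ (Fw - Fx - cr * Fz) * (-(Cα * Fz)) := by
    rw [← div_le_iff₀ hb, div_neg]
    constructor <;> intro h <;> linarith
  rw [key, ge_iff_le, Real.sqrt_le_iff]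
  constructor
  · rintro ⟨_, h⟩
    nlinarith
  · intro h
    have ha : 0 ≤ Fw - Fx - cr * Fz :=
      nonneg_of_mul_nonneg_left ((sq_nonneg Fy).trans h) hb
    constructor
    · linarith
    · nlinarith
end

section
/- Let μ_x > 0, μ_y > 0, F_nom > 0 and γ ≤ 0 be real numbers, and let h(F_z, ΔF) = (γ/(2·F_nom))·(F_z² + ΔF²) + (1 − γ)·F_z. Then the set {(F_x, F_y, F_z, ΔF, F⋆) ∈ ℝ⁵ : sqrt((F_x/μ_x)² + (F_y/μ_y)²) ≤ F⋆ ∧ F⋆ ≤ h(F_z, ΔF)} is convex. -/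
/-- The feasible set of the load-dependent axle friction-ellipse model
(constraints (21)–(22)) is convex. Coordinates: (F_x, F_y, F_z, ΔF, F⋆). -/
theorem friction_ellipse_load_dependent_convex
    (μx μy Fnom γ : ℝ) (hμx : μx > 0) (hμy : μy > 0) (hF : Fnom > 0) (hγ : γ ≤ 0) :
    Convex ℝ {q : ℝ × ℝ × ℝ × ℝ × ℝ |
      Real.sqrt ((q.1 / μx) ^ 2 + (q.2.1 / μy) ^ 2) ≤ q.2.2.2.2 ∧
      q.2.2.2.2 ≤ γ / (2 * Fnom) * (q.2.2.1 ^ 2 + q.2.2.2.1 ^ 2)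
        + (1 - γ) * q.2.2.1} := by
  rintro ⟨x1, y1, z1, d1, t1⟩ h1 ⟨x2, y2, z2, d2, t2⟩ h2 a b ha hb hab
  simp only [Set.mem_setOf_eq, Prod.smul_mk, Prod.mk_add_mk, smul_eq_mul] at h1 h2 ⊢
  obtain ⟨h1, g1⟩ := h1
  obtain ⟨h2, g2⟩ := h2
  have ht1 : 0 ≤ t1 := (Real.sqrt_nonneg _).trans h1
  have ht2 : 0 ≤ t2 := (Real.sqrt_nonneg _).trans h2
  rw [Real.sqrt_le_left ht1] at h1
  rw [Real.sqrt_le_left ht2] at h2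
  constructor
  · have ex : (a * x1 + b * x2) / μx = a * (x1 / μx) + b * (x2 / μx) := by ring
    have ey : (a * y1 + b * y2) / μy = a * (y1 / μy) + b * (y2 / μy) := by ring
    rw [ex, ey]
    generalize x1 / μx = u1 at *
    generalize x2 / μx = u2 at *
    generalize y1 / μy = v1 at *
    generalize y2 / μy = v2 at *
    rw [Real.sqrt_le_left (by positivity)]
    have hc : u1 * u2 + v1 * v2 ≤ t1 * t2 := by
      apply le_of_abs_le
      apply abs_le_of_sq_le_sq _ (mul_nonneg ht1 ht2)
      have := mul_le_mul h1 h2 (by positivity) (by positivity)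
      nlinarith [sq_nonneg (u1 * v2 - u2 * v1)]
    have hab' : 0 ≤ a * b := mul_nonneg ha hb
    nlinarith [mul_le_mul_of_nonneg_left hc hab', mul_le_mul_of_nonneg_left h1 (sq_nonneg a),
      mul_le_mul_of_nonneg_left h2 (sq_nonneg b)]
  · have hk : γ / (2 * Fnom) ≤ 0 := div_nonpos_of_nonpos_of_nonneg hγ (by positivity)
    generalize γ / (2 * Fnom) = k at *
    have hs : (a * z1 + b * z2) ^ 2 + (a * d1 + b * d2) ^ 2
        ≤ a * (z1 ^ 2 + d1 ^ 2) + b * (z2 ^ 2 + d2 ^ 2) := by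
      obtain rfl : b = 1 - a := by linarith
      nlinarith [mul_nonneg (mul_nonneg ha hb) (sq_nonneg (z1 - z2)),
        mul_nonneg (mul_nonneg ha hb) (sq_nonneg (d1 - d2))]
    have := mul_le_mul_of_nonpos_left hs hk
    linarith [mul_le_mul_of_nonneg_left g1 ha, mul_le_mul_of_nonneg_left g2 hb]
end
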